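/- arXiv:2503.06224 — 2 statements merged into one kernel-verified Lean document; each statement's English description precedes it below -/
import Mathlib

section
/- There exists an absolute constant Cst > 0 such that for every prime p, every integer l ≥ 0, every z ∈ ℍ with Im z ≥ 1, every g ∈ SL₂(ℤ), and every δ' with 0 < δ' < 1, one has M(z, g; δ', p^l, 1) ≤ Cst·( 1 + √δ'·(Im z)/p^l ). -/
/-- The hyperbolic point-pair invariant `u(z,w) = |z−w|² / (Im z · Im w)`. -/
noncomputable def uInv (z w : ℂ) : ℝ := ‖z - w‖ ^ 2 / (z.im * w.im)

/-- The Möbius action of an integer matrix on the upper half-plane. -/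
noncomputable def moeb (γ : Matrix (Fin 2) (Fin 2) ℤ) (z : ℂ) : ℂ :=
  (((γ 0 0 : ℤ) : ℂ) * z + ((γ 0 1 : ℤ) : ℂ)) / (((γ 1 0 : ℤ) : ℂ) * z + ((γ 1 1 : ℤ) : ℂ))

/-- `M(z,g;δ,L,m)`: the number of matrices `γ ∈ M₂(ℤ)` with `det γ = m`, `u(γ·z, z) ≤ δ`,
and both off-diagonal entries of `g⁻¹γg` divisible by `L`. -/
noncomputable def Mcount (z : ℂ) (g : Matrix.SpecialLinearGroup (Fin 2) ℤ) (δ : ℝ)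
    (L m : ℕ) : ℕ :=
  Set.ncard {γ : Matrix (Fin 2) (Fin 2) ℤ | γ.det = (m : ℤ) ∧ uInv (moeb γ z) z ≤ δ ∧
    (L : ℤ) ∣ (((g⁻¹ : Matrix.SpecialLinearGroup (Fin 2) ℤ) : Matrix (Fin 2) (Fin 2) ℤ) * γ *
      (g : Matrix (Fin 2) (Fin 2) ℤ)) 0 1 ∧
    (L : ℤ) ∣ (((g⁻¹ : Matrix.SpecialLinearGroup (Fin 2) ℤ) : Matrix (Fin 2) (Fin 2) ℤ) * γ *
      (g : Matrix (Fin 2) (Fin 2) ℤ)) 1 0}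

lemma key_ineq (γ : Matrix (Fin 2) (Fin 2) ℤ) (z : ℂ) (δ : ℝ) (hy : 1 ≤ z.im)
    (hdet : γ.det = 1) (h : uInv (moeb γ z) z ≤ δ) :
    ((γ 0 0 : ℝ) - γ 1 1 - 2 * γ 1 0 * z.re) ^ 2 * z.im ^ 2 +
      (γ 1 0 * (z.re ^ 2 + z.im ^ 2) + ((γ 0 0 : ℝ) - γ 1 1 - 2 * γ 1 0 * z.re) * z.re
        + γ 0 1) ^ 2 ≤ δ * z.im ^ 2 := by
  rw [Matrix.det_fin_two] at hdet
  have hd : (γ 0 0 : ℝ) * γ 1 1 - γ 0 1 * γ 1 0 = 1 := by exact_mod_cast hdet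
  unfold uInv moeb at h
  generalize γ 0 0 = a at *
  generalize γ 0 1 = b at *
  generalize γ 1 0 = c at *
  generalize γ 1 1 = d at *
  have hy0 : 0 < z.im := by linarith
  set w : ℂ := (c : ℂ) * z + d with hw
  have hwre : w.re = c * z.re + d := by simp [hw]
  have hwim : w.im = c * z.im := by simp [hw]
  have hw0 : w ≠ 0 := by
    intro h0
    have h1 : (c : ℝ) * z.im = 0 := by rw [← hwim, h0]; rfl
    have h2 : (c : ℝ) = 0 := by
      rcases mul_eq_zero.1 h1 with h | h
      · exact h
      · linarith
    have h3 : (c : ℝ) * z.re + d = 0 := by rw [← hwre, h0]; rfl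
    rw [h2] at h3 hd
    have h4 : (d : ℝ) = 0 := by linarith
    rw [h4] at hd
    norm_num at hd
  have hn : 0 < Complex.normSq w := Complex.normSq_pos.2 hw0
  have him : (((a : ℂ) * z + b) / w).im = z.im / Complex.normSq w := by
    rw [Complex.div_im, hwre, hwim]
    field_simp
    simp
    linear_combination z.im * hd
  have hnum : ‖((a : ℂ) * z + b) / w - z‖ ^ 2 =
      Complex.normSq ((a : ℂ) * z + b - z * w) / Complex.normSq w := by
    rw [← Complex.normSq_eq_norm_sq, ← Complex.normSq_div]
    congr 1
    field_simp
  rw [him, hnum] at h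
  have h2 : Complex.normSq ((a : ℂ) * z + b - z * w) / Complex.normSq w /
      (z.im / Complex.normSq w * z.im) = Complex.normSq ((a : ℂ) * z + b - z * w) / z.im ^ 2 := by
    field_simp
  rw [h2, div_le_iff₀ (by positivity)] at h
  refine le_trans (le_of_eq ?_) h
  rw [Complex.normSq_apply]
  simp only [Complex.sub_re, Complex.sub_im, Complex.add_re, Complex.add_im, Complex.mul_re,
    Complex.mul_im, hwre, hwim, Complex.intCast_re, Complex.intCast_im]
  ring

lemma bounds (a b c d : ℤ) (x y δ : ℝ) (hy : 1 ≤ y) (hδ1 : δ < 1)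
    (hdet : a * d - b * c = 1)
    (h : ((a : ℝ) - d - 2 * c * x) ^ 2 * y ^ 2 +
      (c * (x ^ 2 + y ^ 2) + ((a : ℝ) - d - 2 * c * x) * x + b) ^ 2 ≤ δ * y ^ 2) :
    -1 ≤ c ∧ c ≤ 1 ∧ -2 ≤ a + d ∧ a + d ≤ 2 ∧ |(a : ℝ) - d - 2 * c * x| ≤ 1 := by
  have hd : (a : ℝ) * d - b * c = 1 := by exact_mod_cast hdet
  obtain ⟨t, ht⟩ : ∃ t, t = (a : ℝ) - d - 2 * c * x := ⟨_, rfl⟩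
  obtain ⟨s, hs⟩ : ∃ s, s = c * (x ^ 2 + y ^ 2) + t * x + b := ⟨_, rfl⟩
  rw [← ht, ← hs] at h
  rw [← ht]
  have hy2 : 0 < y ^ 2 := by positivity
  have htr : ((a : ℝ) + d) ^ 2 = 4 + t ^ 2 + 4 * c * s - 4 * c ^ 2 * y ^ 2 := by
    rw [hs, ht]; linear_combination 4 * hd
  have hlt : t ^ 2 * y ^ 2 + s ^ 2 < y ^ 2 := by nlinarith
  have ht1 : t ^ 2 ≤ 1 := by
    by_contra hc
    push Not at hc
    nlinarith [sq_nonneg s]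
  have hs1 : s ^ 2 ≤ y ^ 2 := by nlinarith [mul_nonneg (sq_nonneg t) hy2.le]
  have hsum : ((a : ℝ) + d) ^ 2 < 9 := by
    have : ((a : ℝ) + d) ^ 2 * y ^ 2 < 9 * y ^ 2 := by
      rw [htr]; nlinarith [sq_nonneg (s - 2 * c * y ^ 2)]
    exact lt_of_mul_lt_mul_right this hy2.le
  have hsumZ : (a + d) ^ 2 < 9 := by exact_mod_cast hsum
  have hc4 : (c : ℝ) ^ 2 < 4 := by
    by_contra hc
    push Not at hc
    have h1 : (2 * c * y ^ 2 - s) ^ 2 ≤ 5 * y ^ 2 := by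
      nlinarith [sq_nonneg ((a : ℝ) + d)]
    have h2 : (2 * (c : ℝ) * y ^ 2) ^ 2 ≤ 2 * (2 * c * y ^ 2 - s) ^ 2 + 2 * s ^ 2 := by
      nlinarith [sq_nonneg (2 * (c : ℝ) * y ^ 2 - 2 * s)]
    have h3 : (2 * (c : ℝ) * y ^ 2) ^ 2 = 4 * (c ^ 2 * y ^ 2) * y ^ 2 := by ring
    have h4 : 4 ≤ (c : ℝ) ^ 2 * y ^ 2 := by nlinarith
    nlinarith
  have hcZ : c ^ 2 < 4 := by exact_mod_cast hc4
  refine ⟨by nlinarith, by nlinarith, by nlinarith, by nlinarith, ?_⟩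
  exact (sq_le_one_iff_abs_le_one t).1 ht1

lemma dvd_b (g : Matrix.SpecialLinearGroup (Fin 2) ℤ) (γ : Matrix (Fin 2) (Fin 2) ℤ) (L : ℤ)
    (hc : γ 1 0 = 0) (had : γ 0 0 = γ 1 1)
    (h1 : L ∣ (((g⁻¹ : Matrix.SpecialLinearGroup (Fin 2) ℤ) : Matrix (Fin 2) (Fin 2) ℤ) * γ *
      (g : Matrix (Fin 2) (Fin 2) ℤ)) 0 1)
    (h2 : L ∣ (((g⁻¹ : Matrix.SpecialLinearGroup (Fin 2) ℤ) : Matrix (Fin 2) (Fin 2) ℤ) * γ *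
      (g : Matrix (Fin 2) (Fin 2) ℤ)) 1 0) : L ∣ γ 0 1 := by
  have hg := g.det_coe
  rw [Matrix.det_fin_two] at hg
  rw [Matrix.SpecialLinearGroup.coe_inv, Matrix.adjugate_fin_two] at h1 h2
  simp only [Matrix.mul_apply, Fin.sum_univ_two, Matrix.of_apply, Matrix.cons_val', Matrix.cons_val_zero,
    Matrix.cons_val_one, Matrix.cons_val_fin_one, hc, had] at h1 h2
  generalize (g : Matrix (Fin 2) (Fin 2) ℤ) 0 0 = p at *
  generalize (g : Matrix (Fin 2) (Fin 2) ℤ) 0 1 = q at *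
  generalize (g : Matrix (Fin 2) (Fin 2) ℤ) 1 0 = r at *
  generalize (g : Matrix (Fin 2) (Fin 2) ℤ) 1 1 = s at *
  obtain ⟨u, hu⟩ := h1
  obtain ⟨v, hv⟩ := h2
  have e1 : γ 0 1 * s ^ 2 = L * u := by rw [← hu]; ring
  have e2 : γ 0 1 * r ^ 2 = -(L * v) := by rw [← hv]; ring
  have hcop : IsCoprime (s ^ 2) (r ^ 2) := by
    apply IsCoprime.pow
    exact ⟨p, -q, by linarith⟩
  obtain ⟨m, n, hmn⟩ := hcop
  refine ⟨m * u - n * v, ?_⟩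
  linear_combination (-γ 0 1) * hmn + m * e1 + n * e2

theorem stmt_18 :
    ∃ Cst : ℝ, 0 < Cst ∧
      ∀ (p : ℕ), p.Prime →
      ∀ l : ℕ, ∀ z : ℂ, 1 ≤ z.im →
      ∀ g : Matrix.SpecialLinearGroup (Fin 2) ℤ,
      ∀ δ : ℝ, 0 < δ → δ < 1 →
        (Mcount z g δ (p ^ l) 1 : ℝ) ≤ Cst * (1 + Real.sqrt δ * z.im / (p : ℝ) ^ l) := by
  refine ⟨100, by norm_num, ?_⟩
  intro p hp l z hy g δ hδ hδ1
  have hL : 0 < p ^ l := pow_pos hp.pos l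
  have hcast : (p : ℝ) ^ l = ((p ^ l : ℕ) : ℝ) := by push_cast; rfl
  rw [hcast]
  generalize p ^ l = L at *
  have hLR : (0 : ℝ) < L := by exact_mod_cast hL
  unfold Mcount
  set S := {γ : Matrix (Fin 2) (Fin 2) ℤ | γ.det = ((1 : ℕ) : ℤ) ∧ uInv (moeb γ z) z ≤ δ ∧
    (L : ℤ) ∣ (((g⁻¹ : Matrix.SpecialLinearGroup (Fin 2) ℤ) : Matrix (Fin 2) (Fin 2) ℤ) * γ *
      (g : Matrix (Fin 2) (Fin 2) ℤ)) 0 1 ∧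
    (L : ℤ) ∣ (((g⁻¹ : Matrix.SpecialLinearGroup (Fin 2) ℤ) : Matrix (Fin 2) (Fin 2) ℤ) * γ *
      (g : Matrix (Fin 2) (Fin 2) ℤ)) 1 0} with hS
  have hB : ∀ γ ∈ S, γ 0 0 * γ 1 1 - γ 0 1 * γ 1 0 = 1 ∧ -1 ≤ γ 1 0 ∧ γ 1 0 ≤ 1 ∧
      -2 ≤ γ 0 0 + γ 1 1 ∧ γ 0 0 + γ 1 1 ≤ 2 ∧
      |(γ 0 0 : ℝ) - γ 1 1 - 2 * γ 1 0 * z.re| ≤ 1 := by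
    rintro γ ⟨h1, h2, -, -⟩
    have h1' : γ.det = 1 := by simpa using h1
    have hk := key_ineq γ z δ hy h1' h2
    rw [Matrix.det_fin_two] at h1'
    exact ⟨h1', bounds _ _ _ _ _ _ _ hy hδ1 h1' hk⟩
  have hsplit : S = {γ ∈ S | γ 1 0 ≠ 0} ∪ {γ ∈ S | γ 1 0 = 0} := by
    ext γ
    simp only [Set.mem_union, Set.mem_setOf_eq]
    tauto
  have hA : ({γ ∈ S | γ 1 0 ≠ 0}).ncard ≤ 60 := by
    let T : Finset (ℤ × ℤ × ℤ) := Finset.Icc (-1) 1 ×ˢ Finset.Icc (-2) 2 ×ˢ Finset.Icc (-1) 2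
    have hT : (T : Set (ℤ × ℤ × ℤ)).ncard = 60 := by
      rw [Set.ncard_coe_finset]; rfl
    rw [← hT]
    refine Set.ncard_le_ncard_of_injOn
      (fun γ => (γ 1 0, γ 0 0 + γ 1 1, γ 0 0 - γ 1 1 - ⌊2 * (γ 1 0 : ℝ) * z.re⌋)) ?_ ?_
      (Finset.finite_toSet _)
    · rintro γ ⟨hγ, -⟩
      obtain ⟨-, h1, h2, h3, h4, h5⟩ := hB γ hγ
      rw [abs_le] at h5
      have f1 := Int.floor_le (2 * (γ 1 0 : ℝ) * z.re)
      have f2 := Int.lt_floor_add_one (2 * (γ 1 0 : ℝ) * z.re)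
      generalize ⌊2 * (γ 1 0 : ℝ) * z.re⌋ = k at *
      have g1 : ((-1 : ℤ) : ℝ) ≤ ((γ 0 0 - γ 1 1 - k : ℤ) : ℝ) := by push_cast; linarith
      have g2 : ((γ 0 0 - γ 1 1 - k : ℤ) : ℝ) ≤ ((2 : ℤ) : ℝ) := by push_cast; linarith
      have g1' := Int.cast_le.1 g1
      have g2' := Int.cast_le.1 g2
      simp only [T, Finset.coe_product, Finset.coe_Icc, Set.mem_prod, Set.mem_Icc]
      exact ⟨⟨h1, h2⟩, ⟨h3, h4⟩, g1', g2'⟩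
    · rintro γ ⟨hγ, hc⟩ γ' ⟨hγ', hc'⟩ heq
      simp only [Prod.mk.injEq] at heq
      obtain ⟨e1, e2, e3⟩ := heq
      rw [e1] at e3
      have d1 := (hB γ hγ).1
      have d2 := (hB γ' hγ').1
      have ea : γ 0 0 = γ' 0 0 := by omega
      have ed : γ 1 1 = γ' 1 1 := by omega
      rw [ea, ed, e1] at d1
      have eb : γ 0 1 = γ' 0 1 := mul_right_cancel₀ hc' (by linarith)
      ext i j
      fin_cases i <;> fin_cases j <;> assumption
  have hD : (({γ ∈ S | γ 1 0 = 0}).ncard : ℝ) ≤ 2 * (2 * (Real.sqrt δ * z.im / L) + 1) := by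
    set N : ℤ := ⌊Real.sqrt δ * z.im / L⌋ with hN
    have hR0 : 0 ≤ Real.sqrt δ * z.im / L := by positivity
    have hN0 : 0 ≤ N := Int.floor_nonneg.2 hR0
    let T : Finset (ℤ × ℤ) := ({-1, 1} : Finset ℤ) ×ˢ Finset.Icc (-N) N
    have hT : ((T : Set (ℤ × ℤ)).ncard : ℝ) = 2 * (2 * N + 1) := by
      rw [Set.ncard_coe_finset, Finset.card_product, Int.card_Icc]
      have : ((N + 1 - -N).toNat : ℤ) = 2 * N + 1 := by omega
      have h' : ((N + 1 - -N).toNat : ℝ) = 2 * N + 1 := by exact_mod_cast this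
      rw [Nat.cast_mul, h']
      norm_num
    have hle : ({γ ∈ S | γ 1 0 = 0}).ncard ≤ (T : Set (ℤ × ℤ)).ncard := by
      have hU : ∀ γ ∈ S, γ 1 0 = 0 → γ 0 0 = γ 1 1 ∧ (γ 0 0 = -1 ∨ γ 0 0 = 1) ∧
          (L : ℤ) ∣ γ 0 1 := by
        intro γ hγ hc
        have d1 := (hB γ hγ).1
        rw [hc, mul_zero, sub_zero] at d1
        have had : γ 0 0 = γ 1 1 ∧ (γ 0 0 = -1 ∨ γ 0 0 = 1) := by
          rcases Int.mul_eq_one_iff_eq_one_or_neg_one.1 d1 with h | h <;> omega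
        exact ⟨had.1, had.2, dvd_b g γ L hc had.1 hγ.2.2.1 hγ.2.2.2⟩
      refine Set.ncard_le_ncard_of_injOn (fun γ => (γ 0 0, γ 0 1 / L)) ?_ ?_
        (Finset.finite_toSet _)
      · rintro γ ⟨hγ, hc⟩
        obtain ⟨had, hpm, k, hk⟩ := hU γ hγ hc
        have hkk : γ 0 1 / (L : ℤ) = k := by
          rw [hk]; exact Int.mul_ediv_cancel_left _ (by omega)
        have hki := key_ineq γ z δ hy (by simpa using hγ.1) hγ.2.1
        rw [hc, had, hk] at hki
        have hsq : ((L : ℝ) * k) ^ 2 ≤ (Real.sqrt δ * z.im) ^ 2 := by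
          rw [mul_pow (Real.sqrt δ), Real.sq_sqrt hδ.le]
          refine le_trans (le_of_eq ?_) hki
          push_cast; ring
        have habs := abs_le_of_sq_le_sq' hsq (by positivity)
        have k1 : k ≤ N := by
          rw [hN, Int.le_floor, le_div_iff₀ hLR]; linarith [habs.2]
        have k2 : -k ≤ N := by
          rw [hN, Int.le_floor, le_div_iff₀ hLR]; push_cast; linarith [habs.1]
        simp only [T, hkk, Finset.coe_product, Finset.coe_Icc, Set.mem_prod, Set.mem_Icc]
        refine ⟨by simpa using hpm, by linarith, k1⟩
      · rintro γ ⟨hγ, hc⟩ γ' ⟨hγ', hc'⟩ heq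
        simp only [Prod.mk.injEq] at heq
        obtain ⟨e1, e2⟩ := heq
        obtain ⟨had, -, hk⟩ := hU γ hγ hc
        obtain ⟨had', -, hk'⟩ := hU γ' hγ' hc'
        have eb : γ 0 1 = γ' 0 1 := by
          rw [← Int.mul_ediv_cancel' hk, ← Int.mul_ediv_cancel' hk', e2]
        have ec : γ 1 0 = γ' 1 0 := by rw [hc, hc']
        have ed : γ 1 1 = γ' 1 1 := by rw [← had, ← had', e1]
        ext i j
        fin_cases i <;> fin_cases j <;> assumption
    have hle' : (({γ ∈ S | γ 1 0 = 0}).ncard : ℝ) ≤ ((T : Set (ℤ × ℤ)).ncard : ℝ) := by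
      exact_mod_cast hle
    rw [hT] at hle'
    have := Int.floor_le (Real.sqrt δ * z.im / L)
    rw [← hN] at this
    linarith
  have hA' : (({γ ∈ S | γ 1 0 ≠ 0}).ncard : ℝ) ≤ 60 := by exact_mod_cast hA
  have hun : (S.ncard : ℝ) ≤ (({γ ∈ S | γ 1 0 ≠ 0}).ncard : ℝ) + ({γ ∈ S | γ 1 0 = 0}).ncard := by
    have := Set.ncard_union_le {γ ∈ S | γ 1 0 ≠ 0} {γ ∈ S | γ 1 0 = 0}
    rw [← hsplit] at this
    exact_mod_cast this
  have hR0 : 0 ≤ Real.sqrt δ * z.im / L := by positivity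
  linarith
end

section
/- Let γ = [[a,b],[c,d]] ∈ M₂(ℝ) with m := det γ > 0, and let z ∈ ℍ. Then (a + d)² ≤ 2m·(2 + u(γ·z, z)) and (c·Im z)² ≤ m·(2 + u(γ·z, z)). -/
/-- The Möbius action of a real matrix on the upper half-plane. -/
noncomputable def moebR (γ : Matrix (Fin 2) (Fin 2) ℝ) (z : ℂ) : ℂ :=
  (((γ 0 0 : ℝ) : ℂ) * z + ((γ 0 1 : ℝ) : ℂ)) / (((γ 1 0 : ℝ) : ℂ) * z + ((γ 1 1 : ℝ) : ℂ))

theorem key_aux (a b c d x y : ℝ) (hm : 0 < a * d - b * c) (hy : 0 < y) (z : ℂ)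
    (hx : z.re = x) (hy' : z.im = y) :
    (a * d - b * c) * (2 + uInv (((a : ℂ) * z + b) / ((c : ℂ) * z + d)) z) =
      (a - c * x) ^ 2 + (d + c * x) ^ 2 + ((b + (a - d) * x - c * x ^ 2) / y) ^ 2
        + (c * y) ^ 2 := by
  have hN : 0 < (c * x + d) ^ 2 + (c * y) ^ 2 := by
    rcases eq_or_ne c 0 with h | h
    · subst h
      have : d ≠ 0 := by rintro rfl; simp at hm
      have := sq_pos_of_ne_zero this
      nlinarith
    · have := sq_pos_of_ne_zero (mul_ne_zero h hy.ne')
      positivity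
  have hns : Complex.normSq ((c : ℂ) * z + d) = (c * x + d) ^ 2 + (c * y) ^ 2 := by
    simp [Complex.normSq_apply, hx, hy']; ring
  have hden : (c : ℂ) * z + d ≠ 0 := by
    intro h
    rw [h] at hns; simp at hns; linarith
  have him : (((a : ℂ) * z + b) / ((c : ℂ) * z + d)).im =
      (a * d - b * c) * y / ((c * x + d) ^ 2 + (c * y) ^ 2) := by
    rw [Complex.div_im, hns]
    simp [hx, hy']; field_simp; ring
  have hsub : ((a : ℂ) * z + b) / ((c : ℂ) * z + d) - z =
      ((a : ℂ) * z + b - z * ((c : ℂ) * z + d)) / ((c : ℂ) * z + d) := by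
    rw [sub_div, mul_div_assoc, div_self hden, mul_one]
  have hnum : Complex.normSq ((a : ℂ) * z + b - z * ((c : ℂ) * z + d)) =
      (b + (a - d) * x - c * x ^ 2 + c * y ^ 2) ^ 2 + y ^ 2 * (a - d - 2 * c * x) ^ 2 := by
    simp [Complex.normSq_apply, hx, hy']; ring
  have hm' := hm.ne'
  have hN' := hN.ne'
  have hyn := hy.ne'
  have hu : uInv (((a : ℂ) * z + b) / ((c : ℂ) * z + d)) z =
      ((b + (a - d) * x - c * x ^ 2 + c * y ^ 2) ^ 2 + y ^ 2 * (a - d - 2 * c * x) ^ 2)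
        / ((a * d - b * c) * y ^ 2) := by
    unfold uInv
    rw [him, hsub, ← Complex.normSq_eq_norm_sq, map_div₀, hnum, hns, hy']
    generalize (c * x + d) ^ 2 + (c * y) ^ 2 = N at *
    generalize a * d - b * c = m at *
    field_simp
  rw [hu, mul_add, ← mul_div_assoc, mul_div_mul_left _ _ hm']
  field_simp
  ring

/-- For `γ = [[a,b],[c,d]] ∈ M₂(ℝ)` with `m = det γ > 0` and `z ∈ ℍ`:
`(a+d)² ≤ 2m(2 + u(γ·z, z))` and `(c·Im z)² ≤ m(2 + u(γ·z, z))`. -/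
theorem stmt_19 (γ : Matrix (Fin 2) (Fin 2) ℝ) (hm : 0 < γ.det) (z : ℂ) (hz : 0 < z.im) :
    (γ 0 0 + γ 1 1) ^ 2 ≤ 2 * γ.det * (2 + uInv (moebR γ z) z) ∧
    (γ 1 0 * z.im) ^ 2 ≤ γ.det * (2 + uInv (moebR γ z) z) := by
  have h := key_aux (γ 0 0) (γ 0 1) (γ 1 0) (γ 1 1) z.re z.im
    (by rwa [Matrix.det_fin_two] at hm) hz z rfl rfl
  rw [← Matrix.det_fin_two] at h
  change γ.det * (2 + uInv (moebR γ z) z) = _ at h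
  rw [mul_assoc, h]
  have h1 := sq_nonneg ((γ 0 1 + (γ 0 0 - γ 1 1) * z.re - γ 1 0 * z.re ^ 2) / z.im)
  have h2 := sq_nonneg (γ 1 0 * z.im)
  have h3 := sq_nonneg (γ 0 0 - γ 1 0 * z.re)
  have h4 := sq_nonneg (γ 1 1 + γ 1 0 * z.re)
  have h5 := sq_nonneg ((γ 0 0 - γ 1 0 * z.re) - (γ 1 1 + γ 1 0 * z.re))
  constructor
  · linarith
  · linarith
end
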